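/- arXiv:1905.04653 — 2 statements merged into one kernel-verified Lean document; each statement's English description precedes it below -/
import Mathlib

section
/- Let 1 ≤ x2, x3 ≤ x1 and let N = 2x1 + x2 + x3 - 2. Then for every partition E(K_N) = E1 ∪ E2 ∪ E3 of the edges of the complete graph on N vertices, there is some i ∈ {1,2,3} such that the graph with edge set Ei contains a connected matching of size at least xi. -/
open SimpleGraph

variable {V : Type*}

/-- `M` is a matching: a finite set of ordered pairs of adjacent vertices
with pairwise disjoint endpoints. -/
def IsMatchingSet (G : SimpleGraph V) (M : Finset (V × V)) : Prop :=
  (∀ e ∈ M, G.Adj e.1 e.2) ∧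
  ∀ e ∈ M, ∀ f ∈ M, e ≠ f →
    e.1 ≠ f.1 ∧ e.1 ≠ f.2 ∧ e.2 ≠ f.1 ∧ e.2 ≠ f.2

/-- `M` is a connected matching in `G`: a matching all of whose edges lie in
one connected component of `G`. -/
def ConnMatching (G : SimpleGraph V) (M : Finset (V × V)) : Prop :=
  IsMatchingSet G M ∧ ∀ e ∈ M, ∀ f ∈ M, G.Reachable e.1 f.1

/-- Vertex `v` is covered by the matching `M`. -/
def Covers (M : Finset (V × V)) (v : V) : Prop :=
  ∃ e ∈ M, v = e.1 ∨ v = e.2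

/-- The color-`i` subgraph of `G` under the edge-coloring `c`. -/
def colorSub (G : SimpleGraph V) {k : ℕ} (c : Sym2 V → Fin k) (i : Fin k) :
    SimpleGraph V :=
  SimpleGraph.fromRel (fun u v => G.Adj u v ∧ c s(u, v) = i)

/-!
By induction, assume that the theorem holds inside every proper set of vertices. By Gallai's
lemma, a component of colour `i` on at least `2 * x i` vertices has a matching of size `x i` or a
vertex `v` lying in all its maximum matchings. In the latter case delete `v` and lower `x i` by
one: a matching obtained in colour `i` is too large for the component, so it lives outside. Hence
the complement of every component has at least `m = min x` vertices. Two components of different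
colours through a vertex cannot cover everything: the third colour would contain all edges between
their complements, so these complements lie in one component of the third colour, and any two of
the three components would give a matching of size `m` in the remaining colour.

Now two vertices sharing components of two colours share the third as well. Around a vertex `v`
whose set `P₀` of vertices sharing all three components with `v` is largest, the other vertices
split into one petal `P i` per colour, joined completely to `P₀` in colour `i` and no larger than
`P₀`. If no petal has `x i` vertices, induction in `P₀` with targets `x i - |P i|` gives a
matching in some colour `i`, and matching `P i` into the vertices of `P₀` left free makes it large
enough.
-/

section CoveredVerts

variable [DecidableEq V] {M N : Finset (V × V)} {v : V}

/-- The vertices covered by `M`, as a finite set, so that they can be counted; the predicate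
`Covers M` is membership in it. -/
def coveredVerts (M : Finset (V × V)) : Finset V :=
  M.biUnion fun e => {e.1, e.2}

theorem mem_coveredVerts : v ∈ coveredVerts M ↔ Covers M v := by
  simp [coveredVerts, Covers]

theorem mem_coveredVerts_of_mem {e : V × V} (he : e ∈ M) (hv : v ∈ ({e.1, e.2} : Finset V)) :
    v ∈ coveredVerts M :=
  Finset.mem_biUnion.2 ⟨e, he, hv⟩

theorem coveredVerts_mono (h : N ⊆ M) : coveredVerts N ⊆ coveredVerts M :=
  Finset.biUnion_subset_biUnion_of_subset_left _ h

theorem coveredVerts_union : coveredVerts (M ∪ N) = coveredVerts M ∪ coveredVerts N :=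
  Finset.union_biUnion

theorem coveredVerts_insert (e : V × V) :
    coveredVerts (insert e M) = {e.1, e.2} ∪ coveredVerts M :=
  Finset.biUnion_insert

theorem exists_pair_eq_of_mem_coveredVerts (hv : v ∈ coveredVerts M) :
    ∃ e ∈ M, ∃ w, ({e.1, e.2} : Finset V) = {v, w} := by
  obtain ⟨e, he, rfl | rfl⟩ := mem_coveredVerts.1 hv
  · exact ⟨e, he, e.2, rfl⟩
  · exact ⟨e, he, e.1, Finset.pair_comm _ _⟩

theorem card_insert_of_disjoint_coveredVerts {e : V × V}
    (heM : Disjoint {e.1, e.2} (coveredVerts M)) : (insert e M).card = M.card + 1 :=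
  Finset.card_insert_of_notMem fun h => Finset.disjoint_left.1 heM (Finset.mem_insert_self _ _)
    (mem_coveredVerts_of_mem h (Finset.mem_insert_self _ _))

end CoveredVerts

namespace IsMatchingSet

variable {G : SimpleGraph V} {M N : Finset (V × V)} {e f : V × V} {v : V}

protected theorem empty : IsMatchingSet G ∅ := by
  simp [IsMatchingSet]

protected theorem singleton (he : G.Adj e.1 e.2) : IsMatchingSet G {e} := by
  simpa [IsMatchingSet] using he

protected theorem subset (hM : IsMatchingSet G M) (h : N ⊆ M) : IsMatchingSet G N :=
  ⟨fun e he => hM.1 e (h he), fun e he f hf => hM.2 e (h he) f (h hf)⟩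

variable [DecidableEq V]

theorem eq_of_mem_of_mem (hM : IsMatchingSet G M) (he : e ∈ M) (hf : f ∈ M)
    (hve : v ∈ ({e.1, e.2} : Finset V)) (hvf : v ∈ ({f.1, f.2} : Finset V)) : e = f := by
  by_contra hef
  have := hM.2 e he f hf hef
  grind

theorem card_coveredVerts (hM : IsMatchingSet G M) :
    (coveredVerts M).card = 2 * M.card := by
  rw [coveredVerts, Finset.card_biUnion fun e he f hf hef => Finset.disjoint_left.2
      fun v hve hvf => hef (hM.eq_of_mem_of_mem he hf hve hvf),
    Finset.sum_const_nat fun e he => Finset.card_pair (hM.1 e he).ne, mul_comm]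

protected theorem union (hM : IsMatchingSet G M) (hN : IsMatchingSet G N)
    (hMN : Disjoint (coveredVerts M) (coveredVerts N)) : IsMatchingSet G (M ∪ N) := by
  have cross : ∀ e ∈ M, ∀ f ∈ N,
      e.1 ≠ f.1 ∧ e.1 ≠ f.2 ∧ e.2 ≠ f.1 ∧ e.2 ≠ f.2 := by
    intro e he f hf
    have ne : ∀ a ∈ ({e.1, e.2} : Finset V), ∀ b ∈ ({f.1, f.2} : Finset V), a ≠ b :=
      fun a ha b hb => Finset.disjoint_iff_ne.1 hMN a (mem_coveredVerts_of_mem he ha) b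
        (mem_coveredVerts_of_mem hf hb)
    simp only [Finset.mem_insert, Finset.mem_singleton, forall_eq_or_imp, forall_eq] at ne
    tauto
  refine ⟨fun e he => (Finset.mem_union.1 he).elim (hM.1 e) (hN.1 e), fun e he f hf hef => ?_⟩
  rcases Finset.mem_union.1 he with he | he <;> rcases Finset.mem_union.1 hf with hf | hf
  · exact hM.2 e he f hf hef
  · exact cross e he f hf
  · have := cross f hf e he
    grind
  · exact hN.2 e he f hf hef

protected theorem insert (hM : IsMatchingSet G M) (he : G.Adj e.1 e.2)
    (heM : Disjoint {e.1, e.2} (coveredVerts M)) : IsMatchingSet G (insert e M) :=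
  (IsMatchingSet.singleton he).union hM (by simpa [coveredVerts] using heM)

theorem exchange (hM : IsMatchingSet G M) (hN : IsMatchingSet G N) (he : e ∈ M) {s y : V}
    (hsy : ({e.1, e.2} : Finset V) = {s, y}) (hs : s ∉ coveredVerts N)
    (hy : y ∈ coveredVerts N) :
    ∃ N', IsMatchingSet G N' ∧ N'.card = N.card ∧ coveredVerts N' ⊆ insert s (coveredVerts N) ∧
      (M \ N').card < (M \ N).card := by
  obtain ⟨f, hf, hyf⟩ := Finset.mem_biUnion.1 hy
  have hse : s ∈ ({e.1, e.2} : Finset V) := by simp [hsy]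
  have hye : y ∈ ({e.1, e.2} : Finset V) := by simp [hsy]
  have heN : e ∉ N := fun h => hs (mem_coveredVerts_of_mem h hse)
  have hfM : f ∉ M := fun h => heN (hM.eq_of_mem_of_mem he h hye hyf ▸ hf)
  have hsub : coveredVerts (N.erase f) ⊆ coveredVerts N :=
    coveredVerts_mono (Finset.erase_subset f N)
  have hy' : y ∉ coveredVerts (N.erase f) := by
    intro h
    obtain ⟨g, hg, hyg⟩ := Finset.mem_biUnion.1 h
    obtain ⟨hgf, hgN⟩ := Finset.mem_erase.1 hg
    exact hgf (hN.eq_of_mem_of_mem hgN hf hyg hyf)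
  have hdisj : Disjoint {e.1, e.2} (coveredVerts (N.erase f)) := by
    rw [hsy, Finset.disjoint_insert_left, Finset.disjoint_singleton_left]
    exact ⟨fun h => hs (hsub h), hy'⟩
  refine ⟨insert e (N.erase f), (hN.subset (Finset.erase_subset f N)).insert (hM.1 e he) hdisj,
    ?_, ?_, Finset.card_lt_card ?_⟩
  · rw [card_insert_of_disjoint_coveredVerts hdisj, Finset.card_erase_add_one hf]
  · rw [coveredVerts_insert, hsy]
    grind
  · rw [Finset.ssubset_iff_of_subset (by grind)]
    exact ⟨e, by grind, by grind⟩

end IsMatchingSet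

section Gallai

variable [DecidableEq V] {G : SimpleGraph V} {C : Finset V} {M N : Finset (V × V)}

/-- `M` is a maximum matching among the matchings of `G` covering only vertices of `C`. -/
structure IsMaxMatchingOn (G : SimpleGraph V) (C : Finset V) (M : Finset (V × V)) : Prop where
  isMatchingSet : IsMatchingSet G M
  coveredVerts_subset : coveredVerts M ⊆ C
  card_le : ∀ N, IsMatchingSet G N → coveredVerts N ⊆ C → N.card ≤ M.card

theorem exists_isMaxMatchingOn (G : SimpleGraph V) (C : Finset V) :
    ∃ M, IsMaxMatchingOn G C M := by
  classical
  let F : Finset (Finset (V × V)) :=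
    {M ∈ (C ×ˢ C).powerset | IsMatchingSet G M ∧ coveredVerts M ⊆ C}
  have mem_F : ∀ {M}, M ∈ F ↔ IsMatchingSet G M ∧ coveredVerts M ⊆ C := by
    intro M
    refine Finset.mem_filter.trans (and_iff_right_of_imp fun h => Finset.mem_powerset.2 ?_)
    exact fun e he => Finset.mem_product.2 ⟨h.2 (mem_coveredVerts_of_mem he (by simp)),
      h.2 (mem_coveredVerts_of_mem he (by simp))⟩
  have hF : F.Nonempty := ⟨∅, mem_F.2 ⟨.empty, by simp [coveredVerts]⟩⟩
  obtain ⟨M, hM, hmax⟩ := F.exists_max_image Finset.card hF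
  exact ⟨M, (mem_F.1 hM).1, (mem_F.1 hM).2, fun N hN hNC => hmax N (mem_F.2 ⟨hN, hNC⟩)⟩

namespace IsMaxMatchingOn

theorem card_eq (hM : IsMaxMatchingOn G C M) (hN : IsMaxMatchingOn G C N) : M.card = N.card :=
  (hN.card_le M hM.isMatchingSet hM.coveredVerts_subset).antisymm
    (hM.card_le N hN.isMatchingSet hN.coveredVerts_subset)

theorem not_disjoint_coveredVerts (hM : IsMaxMatchingOn G C M) {e : V × V} (he : G.Adj e.1 e.2)
    (heC : {e.1, e.2} ⊆ C) : ¬ Disjoint {e.1, e.2} (coveredVerts M) := by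
  intro h
  have := hM.card_le _ (hM.isMatchingSet.insert he h) (by
    rw [coveredVerts_insert]
    exact Finset.union_subset heC hM.coveredVerts_subset)
  rw [card_insert_of_disjoint_coveredVerts h] at this
  omega

/-- If `M` missed both `u` and `v`, then any maximum matching missing `t` could be exchanged for one
that still misses `t` and has more edges in common with `M`. -/
theorem mem_coveredVerts_trans {t u v : V} (huv : u ≠ v)
    (htu : ∀ N, IsMaxMatchingOn G C N → t ∉ coveredVerts N → u ∈ coveredVerts N)
    (htv : ∀ N, IsMaxMatchingOn G C N → t ∉ coveredVerts N → v ∈ coveredVerts N)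
    (hN : IsMaxMatchingOn G C N) (htN : t ∉ coveredVerts N)
    (hM : IsMaxMatchingOn G C M) (huM : u ∉ coveredVerts M) : v ∈ coveredVerts M := by
  by_contra hvM
  induction hn : (M \ N).card using Nat.strong_induction_on generalizing N with
  | _ n ih =>
    have hcard : (coveredVerts N \ coveredVerts M).card =
        (coveredVerts M \ coveredVerts N).card := Finset.card_sdiff_comm (by
      rw [hN.isMatchingSet.card_coveredVerts, hM.isMatchingSet.card_coveredVerts, hN.card_eq hM])
    have htwo : 1 < (coveredVerts N \ coveredVerts M).card :=
      Finset.one_lt_card.2 ⟨u, Finset.mem_sdiff.2 ⟨htu N hN htN, huM⟩,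
        v, Finset.mem_sdiff.2 ⟨htv N hN htN, hvM⟩, huv⟩
    obtain ⟨s, hs, hst⟩ := Finset.exists_mem_ne (hcard ▸ htwo) t
    obtain ⟨hsM, hsN⟩ := Finset.mem_sdiff.1 hs
    obtain ⟨e, he, y, hsy⟩ := exists_pair_eq_of_mem_coveredVerts hsM
    have hyN : y ∈ coveredVerts N := by
      have heC : {e.1, e.2} ⊆ C := fun z hz =>
        hM.coveredVerts_subset (mem_coveredVerts_of_mem he hz)
      have := hN.not_disjoint_coveredVerts (hM.isMatchingSet.1 e he) heC
      rw [hsy, Finset.disjoint_insert_left, Finset.disjoint_singleton_left] at this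
      tauto
    obtain ⟨N', hN', hNcard, hNsub, hlt⟩ :=
      hM.isMatchingSet.exchange hN.isMatchingSet he hsy hsN hyN
    have hmax : IsMaxMatchingOn G C N' :=
      ⟨hN', hNsub.trans (Finset.insert_subset (hM.coveredVerts_subset hsM) hN.coveredVerts_subset),
        hNcard ▸ hN.card_le⟩
    have htN' : t ∉ coveredVerts N' := fun h =>
      (Finset.mem_insert.1 (hNsub h)).elim (Ne.symm hst) htN
    exact ih _ (hn ▸ hlt) hmax htN' rfl

theorem mem_coveredVerts_of_reachable
    (hmiss : ∀ v ∈ C, ∃ N, IsMaxMatchingOn G C N ∧ v ∉ coveredVerts N)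
    {u v : (C : Set V)} (huv : (G.induce (C : Set V)).Reachable u v) (hne : u ≠ v)
    (hM : IsMaxMatchingOn G C M) (huM : u.1 ∉ coveredVerts M) : v.1 ∈ coveredVerts M := by
  have mem_of_adj : ∀ {a b : (C : Set V)} {N}, (G.induce (C : Set V)).Adj a b →
      IsMaxMatchingOn G C N → a.1 ∉ coveredVerts N → b.1 ∈ coveredVerts N := by
    intro a b N hab hN haN
    have := hN.not_disjoint_coveredVerts (e := (a.1, b.1)) hab
      (Finset.insert_subset a.2 (Finset.singleton_subset_iff.2 b.2))
    rw [Finset.disjoint_insert_left, Finset.disjoint_singleton_left] at this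
    tauto
  rw [SimpleGraph.reachable_iff_reflTransGen] at huv
  induction huv generalizing M with
  | refl => exact absurd rfl hne
  | @tail b c _ hbc ih =>
    rcases eq_or_ne u b with rfl | hub
    · exact mem_of_adj hbc hM huM
    · obtain ⟨N, hN, hbN⟩ := hmiss b b.2
      refine mem_coveredVerts_trans (Subtype.coe_ne_coe.2 hne) (fun N hN hbN => ?_)
        (fun N hN => mem_of_adj hbc hN) hN hbN hM huM
      by_contra huN
      exact hbN (ih hub hN huN)

theorem card_sdiff_coveredVerts_le_one (hC : (G.induce (C : Set V)).Preconnected)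
    (hmiss : ∀ v ∈ C, ∃ N, IsMaxMatchingOn G C N ∧ v ∉ coveredVerts N)
    (hM : IsMaxMatchingOn G C M) : (C \ coveredVerts M).card ≤ 1 := by
  refine Finset.card_le_one.2 fun u hu v hv => ?_
  by_contra huv
  obtain ⟨huC, huM⟩ := Finset.mem_sdiff.1 hu
  obtain ⟨hvC, hvM⟩ := Finset.mem_sdiff.1 hv
  exact hvM (mem_coveredVerts_of_reachable (u := ⟨u, huC⟩) (v := ⟨v, hvC⟩) hmiss (hC _ _)
    (fun h => huv (congrArg Subtype.val h)) hM huM)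

end IsMaxMatchingOn

theorem exists_isMatchingSet_or_exists_vertex_of_preconnected
    (hC : (G.induce (C : Set V)).Preconnected) {k : ℕ} (hk : 2 * k ≤ C.card) :
    (∃ M, IsMatchingSet G M ∧ coveredVerts M ⊆ C ∧ k ≤ M.card) ∨
      ∃ v ∈ C, ∀ M, IsMatchingSet G M → coveredVerts M ⊆ C → v ∉ coveredVerts M →
        M.card + 1 < k := by
  obtain ⟨M, hM⟩ := exists_isMaxMatchingOn G C
  by_cases hMk : k ≤ M.card
  · exact .inl ⟨M, hM.isMatchingSet, hM.coveredVerts_subset, hMk⟩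
  right
  obtain ⟨v, hvC, hv⟩ : ∃ v ∈ C, ∀ N, IsMaxMatchingOn G C N → v ∈ coveredVerts N := by
    by_contra! hmiss
    have := hM.card_sdiff_coveredVerts_le_one hC hmiss
    rw [Finset.card_sdiff_of_subset hM.coveredVerts_subset,
      hM.isMatchingSet.card_coveredVerts] at this
    omega
  refine ⟨v, hvC, fun N hN hNC hvN => ?_⟩
  have hlt : N.card < M.card := by
    by_contra! hle
    exact hvN (hv N ⟨hN, hNC, fun L hL hLC => (hM.card_le L hL hLC).trans hle⟩)
  omega

end Gallai

section ConnMatching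

variable {W : Type*} {G : SimpleGraph V} {H : SimpleGraph W} {M : Finset (V × V)}
  {S T A B : Finset V} {k l : ℕ}

theorem ConnMatching.reachable (hM : ConnMatching G M) {u v : V} (hu : Covers M u)
    (hv : Covers M v) : G.Reachable u v := by
  have reachable_fst : ∀ e ∈ M, ∀ w, w = e.1 ∨ w = e.2 → G.Reachable e.1 w := by
    rintro e he w (rfl | rfl)
    exacts [.rfl, (hM.1.1 e he).reachable]
  obtain ⟨e, he, hue⟩ := hu
  obtain ⟨f, hf, hvf⟩ := hv
  exact (reachable_fst e he u hue).symm.trans ((hM.2 e he f hf).trans (reachable_fst f hf v hvf))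

/-- `G` has a connected matching with at least `k` edges, all of whose endpoints lie in `S`. The
edges of the matching are to lie in one component of `G`, not of the subgraph induced by `S`. -/
def HasConnMatching (G : SimpleGraph V) (S : Finset V) (k : ℕ) : Prop :=
  ∃ M, ConnMatching G M ∧ (∀ v, Covers M v → v ∈ S) ∧ k ≤ M.card

theorem hasConnMatching_zero (G : SimpleGraph V) (S : Finset V) : HasConnMatching G S 0 :=
  ⟨∅, ⟨.empty, by simp⟩, by simp [Covers], le_rfl⟩

theorem HasConnMatching.mono (h : HasConnMatching G S k) (hST : S ⊆ T) (hlk : l ≤ k) :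
    HasConnMatching G T l := by
  obtain ⟨M, hM, hMS, hkM⟩ := h
  exact ⟨M, hM, fun v hv => hST (hMS v hv), hlk.trans hkM⟩

theorem HasConnMatching.map (h : HasConnMatching G S k) (f : G →g H)
    (hf : Function.Injective f) : HasConnMatching H (S.map ⟨f, hf⟩) k := by
  obtain ⟨M, hM, hMS, hkM⟩ := h
  let F : V ↪ W := ⟨f, hf⟩
  refine ⟨M.map (F.prodMap F), ⟨⟨?_, ?_⟩, ?_⟩, ?_, by rwa [Finset.card_map]⟩
  · exact Finset.forall_mem_map.2 fun e he => f.map_adj (hM.1.1 e he)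
  · refine Finset.forall_mem_map.2 fun e he => Finset.forall_mem_map.2 fun e' he' hne => ?_
    obtain ⟨h₁, h₂, h₃, h₄⟩ := hM.1.2 e he e' he' (fun h => hne (congrArg _ h))
    exact ⟨hf.ne h₁, hf.ne h₂, hf.ne h₃, hf.ne h₄⟩
  · exact Finset.forall_mem_map.2 fun e he => Finset.forall_mem_map.2 fun e' he' =>
      (hM.2 e he e' he').map f
  · rintro v ⟨d, hd, hv⟩
    obtain ⟨e, he, rfl⟩ := Finset.mem_map.1 hd
    rcases hv with rfl | rfl
    exacts [Finset.mem_map_of_mem F (hMS _ ⟨e, he, .inl rfl⟩),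
      Finset.mem_map_of_mem F (hMS _ ⟨e, he, .inr rfl⟩)]

section CompleteBetween

theorem reachable_of_isCompleteBetween (h : G.IsCompleteBetween A B) (hA : A.Nonempty)
    (hB : B.Nonempty) {u v : V} (hu : u ∈ A ∨ u ∈ B) (hv : v ∈ A ∨ v ∈ B) :
    G.Reachable u v := by
  obtain ⟨a, ha⟩ := hA
  obtain ⟨b, hb⟩ := hB
  have hab : G.Reachable a b := (h ha hb).reachable
  have reachable_a : ∀ {w}, w ∈ A ∨ w ∈ B → G.Reachable w a := by
    rintro w (hw | hw)
    exacts [(h hw hb).reachable.trans hab.symm, (h ha hw).reachable.symm]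
  exact (reachable_a hu).trans (reachable_a hv).symm

variable [DecidableEq V]

theorem exists_isMatchingSet_of_isCompleteBetween (h : G.IsCompleteBetween A B)
    (hBA : B.card ≤ A.card) :
    ∃ M, IsMatchingSet G M ∧ coveredVerts M ⊆ A ∪ B ∧ M.card = B.card := by
  obtain ⟨f⟩ : Nonempty (B ↪ A) := Function.Embedding.nonempty_of_card_le (by simpa using hBA)
  let g : B ↪ V × V := ⟨fun b => (f b, b), fun b b' hbb => Subtype.ext (congrArg Prod.snd hbb)⟩
  refine ⟨B.attach.map g, ⟨?_, ?_⟩, ?_, by simp⟩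
  · exact Finset.forall_mem_map.2 fun b _ => h (f b).2 b.2
  · refine Finset.forall_mem_map.2 fun b _ => Finset.forall_mem_map.2 fun c _ hne => ?_
    have hbc : b ≠ c := fun h => hne (congrArg g h)
    exact ⟨Subtype.coe_ne_coe.2 (f.injective.ne hbc), (h (f b).2 c.2).ne, (h (f c).2 b.2).ne',
      Subtype.coe_ne_coe.2 hbc⟩
  · refine Finset.biUnion_subset.2 (Finset.forall_mem_map.2 fun b _ => ?_)
    exact Finset.insert_subset (Finset.mem_union_left _ (f b).2)
      (Finset.singleton_subset_iff.2 (Finset.mem_union_right _ b.2))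

theorem IsMatchingSet.hasConnMatching_of_isCompleteBetween (hM : IsMatchingSet G M)
    (hMA : coveredVerts M ⊆ A) (h : G.IsCompleteBetween A B) (hB : B.Nonempty)
    (hcard : 2 * M.card + B.card ≤ A.card) :
    HasConnMatching G (A ∪ B) (M.card + B.card) := by
  have hfree : B.card ≤ (A \ coveredVerts M).card := by
    rw [Finset.card_sdiff_of_subset hMA, hM.card_coveredVerts]
    omega
  obtain ⟨N, hN, hNsub, hNcard⟩ := exists_isMatchingSet_of_isCompleteBetween
    (fun a ha b hb => h (Finset.sdiff_subset ha) hb) hfree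
  have hAB : Disjoint A B := Finset.disjoint_coe.1 h.disjoint
  have hMN : Disjoint (coveredVerts M) (coveredVerts N) := Finset.disjoint_of_subset_right hNsub
    (Finset.disjoint_union_right.2 ⟨Finset.disjoint_sdiff, Finset.disjoint_of_subset_left hMA hAB⟩)
  have hsub : coveredVerts (M ∪ N) ⊆ A ∪ B := by
    rw [coveredVerts_union]
    exact Finset.union_subset (hMA.trans Finset.subset_union_left)
      (hNsub.trans (Finset.union_subset_union_left Finset.sdiff_subset))
  have hA : A.Nonempty := Finset.card_pos.1 (by have := hB.card_pos; omega)
  have mem_AB : ∀ {e}, e ∈ M ∪ N → e.1 ∈ A ∨ e.1 ∈ B := fun he =>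
    Finset.mem_union.1 (hsub (mem_coveredVerts_of_mem he (Finset.mem_insert_self _ _)))
  refine ⟨M ∪ N, ⟨hM.union hN hMN, fun e he f hf =>
    reachable_of_isCompleteBetween h hA hB (mem_AB he) (mem_AB hf)⟩,
    fun v hv => hsub (mem_coveredVerts.2 hv), ?_⟩
  rw [Finset.card_union_of_disjoint, hNcard]
  exact Finset.disjoint_left.2 fun e heM heN => Finset.disjoint_left.1 hMN
    (mem_coveredVerts_of_mem heM (Finset.mem_insert_self _ _))
    (mem_coveredVerts_of_mem heN (Finset.mem_insert_self _ _))

theorem hasConnMatching_of_isCompleteBetween (h : G.IsCompleteBetween A B) (hA : k ≤ A.card)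
    (hB : k ≤ B.card) : HasConnMatching G (A ∪ B) k := by
  wlog hBA : B.card ≤ A.card generalizing A B
  · rw [Finset.union_comm]
    exact this h.symm hB hA (le_of_not_ge hBA)
  rcases B.eq_empty_or_nonempty with rfl | hne
  · exact (hasConnMatching_zero G _).mono subset_rfl hB
  · have : HasConnMatching G (A ∪ B) ((∅ : Finset (V × V)).card + B.card) :=
      IsMatchingSet.empty.hasConnMatching_of_isCompleteBetween (by simp [coveredVerts]) h hne
        (by simpa using hBA)
    exact this.mono subset_rfl (by simpa using hB)

end CompleteBetween

end ConnMatching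

section Colours

variable {i j k : Fin 3}

theorem eq_or_eq_or_eq_of_ne :
    ∀ {i j k : Fin 3}, i ≠ j → i ≠ k → j ≠ k → ∀ l, l = i ∨ l = j ∨ l = k := by
  decide

theorem sum_eq_add_add_of_ne (hij : i ≠ j) (hik : i ≠ k) (hjk : j ≠ k) (f : Fin 3 → ℕ) :
    ∑ l, f l = f i + f j + f k := by
  have huniv : (Finset.univ : Finset (Fin 3)) = {i, j, k} := by
    ext l
    simpa using eq_or_eq_or_eq_of_ne hij hik hjk l
  rw [huniv, Finset.sum_insert (by simp [hij, hik]), Finset.sum_pair hjk, add_assoc]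

theorem exists_ne_ne_ne (i : Fin 3) : ∃ j k, i ≠ j ∧ i ≠ k ∧ j ≠ k := by
  decide +revert

theorem adj_of_not_reachable {G : Fin 3 → SimpleGraph V} (hG : ⨆ i, G i = ⊤) (hij : i ≠ j)
    (hik : i ≠ k) (hjk : j ≠ k) {u v : V} (hi : ¬ (G i).Reachable u v)
    (hj : ¬ (G j).Reachable u v) : (G k).Adj u v := by
  have huv : u ≠ v := by
    rintro rfl
    exact hi .rfl
  obtain ⟨l, hl⟩ : ∃ l, (G l).Adj u v := by
    rw [← iSup_adj, hG]
    exact huv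
  rcases eq_or_eq_or_eq_of_ne hij hik hjk l with rfl | rfl | rfl
  exacts [absurd hl.reachable hi, absurd hl.reachable hj, hl]

end Colours

section ComponentFinset

variable [Fintype V] {G : SimpleGraph V} {v w : V}

open scoped Classical in
/-- The vertex set of the component of `v` in `G`, as a finite set, so that it can be counted. -/
noncomputable def componentFinset (G : SimpleGraph V) (v : V) : Finset V :=
  {w | G.Reachable v w}

theorem mem_componentFinset : w ∈ componentFinset G v ↔ G.Reachable v w := by
  simp [componentFinset]

theorem preconnected_induce_componentFinset (G : SimpleGraph V) (v : V) :
    (G.induce (componentFinset G v : Set V)).Preconnected := by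
  have hsupp : (componentFinset G v : Set V) = (G.connectedComponentMk v).supp := by
    ext w
    simp [mem_componentFinset, reachable_comm]
  rw [hsupp]
  exact (G.connectedComponentMk v).connected_toSimpleGraph.preconnected

theorem IsMatchingSet.hasConnMatching_of_subset_componentFinset {M : Finset (V × V)}
    [DecidableEq V] (hM : IsMatchingSet G M) (hMC : coveredVerts M ⊆ componentFinset G v) :
    HasConnMatching G Finset.univ M.card := by
  have reachable_fst : ∀ {e}, e ∈ M → G.Reachable v e.1 := fun he =>
    mem_componentFinset.1 (hMC (mem_coveredVerts_of_mem he (Finset.mem_insert_self _ _)))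
  exact ⟨M, ⟨hM, fun e he f hf => (reachable_fst he).symm.trans (reachable_fst hf)⟩,
    fun _ _ => Finset.mem_univ _, le_rfl⟩

theorem ConnMatching.subset_componentFinset_or_subset_compl {M : Finset (V × V)} [DecidableEq V]
    (hM : ConnMatching G M) (v : V) :
    coveredVerts M ⊆ componentFinset G v ∨ coveredVerts M ⊆ (componentFinset G v)ᶜ := by
  by_cases h : ∃ u ∈ coveredVerts M, G.Reachable v u
  · obtain ⟨u, huM, hvu⟩ := h
    exact .inl fun w hw => mem_componentFinset.2
      (hvu.trans (hM.reachable (mem_coveredVerts.1 huM) (mem_coveredVerts.1 hw)))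
  · push Not at h
    exact .inr fun w hw => Finset.mem_compl.2 fun hwC => h w hw (mem_componentFinset.1 hwC)

end ComponentFinset

/-- The property of `S` proved by induction: whatever the targets `x`, if `2 * x j + x k + x l` is
at most `S.card + 2` for every ordering `j, k, l` of the colours, then some colour meets its target
by a connected matching in `S`. -/
def ForcesConnMatching (G : Fin 3 → SimpleGraph V) (S : Finset V) : Prop :=
  ∀ x : Fin 3 → ℕ, (∀ j, x j + ∑ i, x i ≤ S.card + 2) → ∃ i, HasConnMatching (G i) S (x i)

section LargeComplements

variable [Fintype V] [DecidableEq V] {G : Fin 3 → SimpleGraph V} {x : Fin 3 → ℕ} {i j k : Fin 3}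
  {m : ℕ}

theorem exists_hasConnMatching_or_le_card_compl_componentFinset
    (hx : ∀ j, x j + ∑ i, x i ≤ Fintype.card V + 2)
    (hdel : ∀ v, ForcesConnMatching G (Finset.univ.erase v)) {v : V}
    (hcard : 2 * x i ≤ (componentFinset (G i) v).card) :
    (∃ j, HasConnMatching (G j) Finset.univ (x j)) ∨ x i ≤ (componentFinset (G i) v)ᶜ.card := by
  rcases exists_isMatchingSet_or_exists_vertex_of_preconnected
    (preconnected_induce_componentFinset (G i) v) hcard with ⟨M, hM, hMC, hxM⟩ | ⟨u, huC, hu⟩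
  · exact .inl ⟨i, (hM.hasConnMatching_of_subset_componentFinset hMC).mono subset_rfl hxM⟩
  have hxi : 1 < x i := hu ∅ .empty (by simp [coveredVerts]) (by simp [coveredVerts])
  let y : Fin 3 → ℕ := Function.update x i (x i - 1)
  have hyi : y i = x i - 1 := Function.update_self ..
  have hyj : ∀ j ≠ i, y j = x j := fun j hj => Function.update_of_ne hj ..
  have hy : ∀ j, y j + ∑ l, y l ≤ (Finset.univ.erase u).card + 2 := by
    intro j
    have hjx : y j ≤ x j := by grind
    obtain ⟨k, l, hik, hil, hkl⟩ := exists_ne_ne_ne i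
    have := hx j
    rw [sum_eq_add_add_of_ne hik hil hkl] at this ⊢
    rw [hyi, hyj k hik.symm, hyj l hil.symm, Finset.card_erase_of_mem (Finset.mem_univ u),
      Finset.card_univ]
    omega
  obtain ⟨j, hj⟩ := hdel u y hy
  rcases ne_or_eq j i with hji | rfl
  · exact .inl ⟨j, hj.mono (Finset.erase_subset _ _) (hyj j hji).ge⟩
  obtain ⟨M, hM, hMu, hyM⟩ := hj
  have huM : u ∉ coveredVerts M := fun h => by simpa using hMu u (mem_coveredVerts.1 h)
  rcases hM.subset_componentFinset_or_subset_compl v with hMC | hMC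
  · have := hu M hM.1 hMC huM
    omega
  · have := Finset.card_le_card hMC
    rw [hM.1.card_coveredVerts] at this
    omega

theorem exists_hasConnMatching_or_forall_le_card_compl_componentFinset
    (hx : ∀ j, x j + ∑ i, x i ≤ Fintype.card V + 2)
    (hdel : ∀ v, ForcesConnMatching G (Finset.univ.erase v)) (hm : ∀ i, m ≤ x i) :
    (∃ i, HasConnMatching (G i) Finset.univ (x i)) ∨
      ∀ i v, m ≤ (componentFinset (G i) v)ᶜ.card := by
  by_contra! ⟨hno, i, v, hlt⟩
  rcases le_or_gt (2 * x i) (componentFinset (G i) v).card with hlarge | hsmall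
  · rcases exists_hasConnMatching_or_le_card_compl_componentFinset hx hdel hlarge with ⟨j, hj⟩ | h
    exacts [hno j hj, absurd (h.trans_lt hlt) (hm i).not_gt]
  · obtain ⟨j, k, hij, hik, hjk⟩ := exists_ne_ne_ne i
    have := hx i
    rw [sum_eq_add_add_of_ne hij hik hjk, ← Finset.card_add_card_compl (componentFinset (G i) v)]
      at this
    have := hm j
    have := hm k
    omega

theorem isCompleteBetween_compl_componentFinset (hG : ⨆ i, G i = ⊤) (hij : i ≠ j) (hik : i ≠ k)
    (hjk : j ≠ k) {u v : V}
    (hdisj : Disjoint (componentFinset (G i) u)ᶜ (componentFinset (G j) v)ᶜ) :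
    (G k).IsCompleteBetween ((componentFinset (G i) u)ᶜ : Finset V)
      ((componentFinset (G j) v)ᶜ : Finset V) := by
  intro a ha b hb
  have hb' := Finset.disjoint_right.1 hdisj hb
  have ha' := Finset.disjoint_left.1 hdisj ha
  simp only [Finset.coe_compl, Set.mem_compl_iff, Finset.mem_coe, Finset.mem_compl, not_not,
    mem_componentFinset] at ha hb ha' hb'
  exact adj_of_not_reachable hG hij hik hjk (fun hab => ha (hb'.trans hab.symm))
    (fun hab => hb (ha'.trans hab))

theorem hasConnMatching_of_disjoint_compl_componentFinset (hG : ⨆ i, G i = ⊤) (hij : i ≠ j)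
    (hik : i ≠ k) (hjk : j ≠ k) {u v : V} (hu : m ≤ (componentFinset (G i) u)ᶜ.card)
    (hv : m ≤ (componentFinset (G j) v)ᶜ.card)
    (hdisj : Disjoint (componentFinset (G i) u)ᶜ (componentFinset (G j) v)ᶜ) :
    HasConnMatching (G k) Finset.univ m :=
  (hasConnMatching_of_isCompleteBetween
    (isCompleteBetween_compl_componentFinset hG hij hik hjk hdisj) hu hv).mono
    (Finset.subset_univ _) le_rfl

/-- Two components of different colours through the same vertex never cover all vertices. -/
def NoTwoComponentsCover (G : Fin 3 → SimpleGraph V) : Prop :=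
  ∀ v i j, i ≠ j → ∃ w, ¬ (G i).Reachable v w ∧ ¬ (G j).Reachable v w

theorem forall_hasConnMatching_or_noTwoComponentsCover (hG : ⨆ i, G i = ⊤) (hm₀ : 0 < m)
    (hm : ∀ i v, m ≤ (componentFinset (G i) v)ᶜ.card) :
    (∀ i, HasConnMatching (G i) Finset.univ m) ∨ NoTwoComponentsCover G := by
  refine or_iff_not_imp_right.2 fun h => ?_
  simp only [NoTwoComponentsCover, not_forall, not_exists] at h
  obtain ⟨v, i, j, hij, hcover⟩ := h
  obtain ⟨k, hki, hkj⟩ := Fin.exists_ne_and_ne_of_two_lt i j (by norm_num)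
  have compl_nonempty : ∀ l w, ((componentFinset (G l) w)ᶜ).Nonempty := fun l w =>
    Finset.card_pos.1 (hm₀.trans_le (hm l w))
  have hdisj : Disjoint (componentFinset (G i) v)ᶜ (componentFinset (G j) v)ᶜ := by
    refine Finset.disjoint_left.2 fun w hwi hwj => hcover w ?_
    simpa only [Finset.mem_compl, mem_componentFinset] using And.intro hwi hwj
  obtain ⟨a, ha⟩ := compl_nonempty j v
  have reachable_a : ∀ w, w ∈ (componentFinset (G i) v)ᶜ ∨ w ∈ (componentFinset (G j) v)ᶜ →
      w ∈ componentFinset (G k) a := fun w hw => mem_componentFinset.2 <|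
    reachable_of_isCompleteBetween
      (isCompleteBetween_compl_componentFinset hG hij hki.symm hkj.symm hdisj)
      (compl_nonempty i v) (compl_nonempty j v) (.inr ha) hw
  intro l
  rcases eq_or_eq_or_eq_of_ne hij hki.symm hkj.symm l with rfl | rfl | rfl
  · exact hasConnMatching_of_disjoint_compl_componentFinset hG hkj.symm hij.symm hki (hm _ _)
      (hm _ _) (disjoint_compl_right_iff.2 fun w hw => reachable_a w (.inr hw))
  · exact hasConnMatching_of_disjoint_compl_componentFinset hG hki.symm hij hkj (hm _ _)
      (hm _ _) (disjoint_compl_right_iff.2 fun w hw => reachable_a w (.inl hw))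
  · exact hasConnMatching_of_disjoint_compl_componentFinset hG hij hki.symm hkj.symm (hm _ _)
      (hm _ _) hdisj

end LargeComplements

section CorePetal

variable {G : Fin 3 → SimpleGraph V} {x : Fin 3 → ℕ} {i j k : Fin 3} {u v w : V}
  {P₀ : Finset V} {P : Fin 3 → Finset V}

theorem reachable_of_reachable_of_reachable (hG : ⨆ i, G i = ⊤) (hcov : NoTwoComponentsCover G)
    (hij : i ≠ j) (hi : (G i).Reachable v w) (hj : (G j).Reachable v w) (l : Fin 3) :
    (G l).Reachable v w := by
  obtain ⟨k, hki, hkj⟩ := Fin.exists_ne_and_ne_of_two_lt i j (by norm_num)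
  obtain ⟨u, hui, huj⟩ := hcov v i j hij
  have hvu : (G k).Adj v u := adj_of_not_reachable hG hij hki.symm hkj.symm hui huj
  have hwu : (G k).Adj w u := adj_of_not_reachable hG hij hki.symm hkj.symm
    (fun h => hui (hi.trans h)) (fun h => huj (hj.trans h))
  rcases eq_or_eq_or_eq_of_ne hij hki.symm hkj.symm l with rfl | rfl | rfl
  exacts [hi, hj, hvu.reachable.trans hwu.reachable.symm]

section Petal

variable [Fintype V]

open scoped Classical in
/-- The vertices that share all three components with `v`: the core around `v`. -/
noncomputable def commonComponent (G : Fin 3 → SimpleGraph V) (v : V) : Finset V :=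
  {w | ∀ i, (G i).Reachable v w}

open scoped Classical in
/-- The part outside the core of the component of `v` in colour `i`: the petal of colour `i`. -/
noncomputable def petal (G : Fin 3 → SimpleGraph V) (v : V) (i : Fin 3) : Finset V :=
  {w | (G i).Reachable v w ∧ ∃ j, ¬ (G j).Reachable v w}

theorem mem_commonComponent : w ∈ commonComponent G v ↔ ∀ i, (G i).Reachable v w := by
  simp [commonComponent]

theorem mem_petal : w ∈ petal G v i ↔ (G i).Reachable v w ∧ ∃ j, ¬ (G j).Reachable v w := by
  simp [petal]

theorem not_reachable_of_mem_petal (hG : ⨆ i, G i = ⊤) (hcov : NoTwoComponentsCover G)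
    (hij : i ≠ j) (hw : w ∈ petal G v i) : ¬ (G j).Reachable v w := by
  obtain ⟨hi, l, hl⟩ := mem_petal.1 hw
  exact fun hj => hl (reachable_of_reachable_of_reachable hG hcov hij hi hj l)

theorem petal_nonempty (hG : ⨆ i, G i = ⊤) (hcov : NoTwoComponentsCover G) (v : V) (i : Fin 3) :
    (petal G v i).Nonempty := by
  obtain ⟨j, k, hij, hik, hjk⟩ := exists_ne_ne_ne i
  obtain ⟨w, hj, hk⟩ := hcov v j k hjk
  have hvw := adj_of_not_reachable hG hjk hij.symm hik.symm hj hk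
  exact ⟨w, mem_petal.2 ⟨hvw.reachable, j, hj⟩⟩

theorem isCompleteBetween_commonComponent_petal (hG : ⨆ i, G i = ⊤)
    (hcov : NoTwoComponentsCover G) (v : V) (i : Fin 3) :
    (G i).IsCompleteBetween (commonComponent G v) (petal G v i) := by
  intro c hc w hw
  obtain ⟨j, k, hij, hik, hjk⟩ := exists_ne_ne_ne i
  have not_reachable : ∀ l, i ≠ l → ¬ (G l).Reachable c w := fun l hil hcw =>
    not_reachable_of_mem_petal hG hcov hil hw ((mem_commonComponent.1 hc l).trans hcw)
  exact adj_of_not_reachable hG hjk hij.symm hik.symm (not_reachable j hij) (not_reachable k hik)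

theorem adj_of_mem_petal_of_mem_petal (hG : ⨆ i, G i = ⊤) (hcov : NoTwoComponentsCover G)
    (hij : i ≠ j) (hik : i ≠ k) (hjk : j ≠ k) (hu : u ∈ petal G v i) (hw : w ∈ petal G v j) :
    (G k).Adj u w :=
  adj_of_not_reachable hG hij hik hjk
    (fun h => not_reachable_of_mem_petal hG hcov hij.symm hw ((mem_petal.1 hu).1.trans h))
    (fun h => not_reachable_of_mem_petal hG hcov hij hu ((mem_petal.1 hw).1.trans h.symm))

theorem petal_subset_commonComponent (hG : ⨆ i, G i = ⊤) (hcov : NoTwoComponentsCover G)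
    (hu : u ∈ petal G v i) : petal G v i ⊆ commonComponent G u := by
  intro w hw
  obtain ⟨j, k, hij, hik, hjk⟩ := exists_ne_ne_ne i
  obtain ⟨p, hp⟩ := petal_nonempty hG hcov v j
  have adj_p : ∀ {a}, a ∈ petal G v i → (G k).Adj a p := fun ha =>
    adj_of_mem_petal_of_mem_petal hG hcov hij hik hjk ha hp
  have hi : (G i).Reachable u w := (mem_petal.1 hu).1.symm.trans (mem_petal.1 hw).1
  have hk : (G k).Reachable u w := (adj_p hu).reachable.trans (adj_p hw).reachable.symm
  exact mem_commonComponent.2 (reachable_of_reachable_of_reachable hG hcov hik hi hk)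

end Petal

/-- A covering of the vertices by a core `P₀` and one petal `P i` per colour, no petal being larger
than the core, such that `G i` contains all edges between the core and the petal `P i`. -/
structure IsCorePetalCover (G : Fin 3 → SimpleGraph V) (P₀ : Finset V) (P : Fin 3 → Finset V) :
    Prop where
  nonempty : ∀ i, (P i).Nonempty
  isCompleteBetween : ∀ i, (G i).IsCompleteBetween P₀ (P i)
  card_le : ∀ i, (P i).card ≤ P₀.card
  cover : ∀ v, v ∈ P₀ ∨ ∃ i, v ∈ P i

theorem exists_isCorePetalCover [Finite V] [Nonempty V] (hG : ⨆ i, G i = ⊤)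
    (hcov : NoTwoComponentsCover G) : ∃ P₀ P, IsCorePetalCover G P₀ P := by
  cases nonempty_fintype V
  obtain ⟨v, hv⟩ := Finite.exists_max fun v => (commonComponent G v).card
  refine ⟨commonComponent G v, petal G v, petal_nonempty hG hcov v,
    isCompleteBetween_commonComponent_petal hG hcov v, fun i => ?_, fun w => ?_⟩
  · obtain ⟨u, hu⟩ := petal_nonempty hG hcov v i
    exact (Finset.card_le_card (petal_subset_commonComponent hG hcov hu)).trans (hv u)
  · refine or_iff_not_imp_left.2 fun hw => ?_
    simp only [mem_commonComponent, not_forall] at hw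
    by_contra! hpetal
    have hnot : ∀ i, ¬ (G i).Reachable v w := fun i hi => hpetal i (mem_petal.2 ⟨hi, hw⟩)
    have hadj : (G 2).Adj v w := adj_of_not_reachable (i := 0) (j := 1) hG (by decide)
      (by decide) (by decide) (hnot 0) (hnot 1)
    exact hnot 2 hadj.reachable

theorem IsCorePetalCover.card_le_add [Fintype V] (h : IsCorePetalCover G P₀ P) :
    Fintype.card V ≤ P₀.card + ∑ i, (P i).card := by
  classical
  have huniv : (Finset.univ : Finset V) = P₀ ∪ Finset.univ.biUnion P := by
    ext v
    simpa using h.cover v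
  calc Fintype.card V = (P₀ ∪ Finset.univ.biUnion P).card := by rw [← huniv, Finset.card_univ]
    _ ≤ P₀.card + (Finset.univ.biUnion P).card := Finset.card_union_le _ _
    _ ≤ P₀.card + ∑ i, (P i).card := by grw [Finset.card_biUnion_le]

theorem IsCorePetalCover.core_ne_univ [Fintype V] (h : IsCorePetalCover G P₀ P) :
    P₀ ≠ Finset.univ := by
  rintro rfl
  obtain ⟨v, hv⟩ := h.nonempty 0
  exact Finset.disjoint_left.1 (Finset.disjoint_coe.1 (h.isCompleteBetween 0).disjoint)
    (Finset.mem_univ v) hv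

theorem IsCorePetalCover.exists_hasConnMatching [Fintype V] (h : IsCorePetalCover G P₀ P)
    (hP₀ : ForcesConnMatching G P₀) (hx : ∀ j, x j + ∑ i, x i ≤ Fintype.card V + 2) :
    ∃ i, HasConnMatching (G i) Finset.univ (x i) := by
  classical
  by_cases hlarge : ∃ i, x i ≤ (P i).card
  · obtain ⟨i, hi⟩ := hlarge
    exact ⟨i, (hasConnMatching_of_isCompleteBetween (h.isCompleteBetween i)
      (hi.trans (h.card_le i)) hi).mono (Finset.subset_univ _) le_rfl⟩
  push Not at hlarge
  have hx' : ∀ j, x j + ∑ i, x i ≤ P₀.card + ∑ i, (P i).card + 2 := fun j =>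
    (hx j).trans (Nat.add_le_add_right h.card_le_add 2)
  have hsum : ∑ i, (x i - (P i).card) + ∑ i, (P i).card = ∑ i, x i := by
    rw [← Finset.sum_add_distrib]
    exact Finset.sum_congr rfl fun i _ => Nat.sub_add_cancel (hlarge i).le
  obtain ⟨i, M, hM, hMP₀, hyM⟩ := hP₀ (fun i => x i - (P i).card) fun j => by
    have := hx' j
    omega
  obtain ⟨N, hNM, hN⟩ := Finset.exists_subset_card_eq hyM
  have hNP₀ : coveredVerts N ⊆ P₀ := fun v hv =>
    hMP₀ v (mem_coveredVerts.1 (coveredVerts_mono hNM hv))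
  have hroom : 2 * N.card + (P i).card ≤ P₀.card := by
    obtain ⟨j, k, hij, hik, hjk⟩ := exists_ne_ne_ne i
    have := hx' i
    rw [sum_eq_add_add_of_ne hij hik hjk, sum_eq_add_add_of_ne hij hik hjk] at this
    have := hlarge i
    have := hlarge j
    have := hlarge k
    omega
  have := (hM.1.subset hNM).hasConnMatching_of_isCompleteBetween hNP₀ (h.isCompleteBetween i)
    (h.nonempty i) hroom
  exact ⟨i, this.mono (Finset.subset_univ _) (by have := hlarge i; omega)⟩

end CorePetal

section Induction

variable {G : Fin 3 → SimpleGraph V} {S : Finset V}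

theorem forcesConnMatching_univ_of_forall_ne_univ [Fintype V] (hG : ⨆ i, G i = ⊤)
    (hS : ∀ S ≠ Finset.univ, ForcesConnMatching G S) : ForcesConnMatching G Finset.univ := by
  classical
  intro x hx
  by_cases hzero : ∃ i, x i = 0
  · obtain ⟨i, hi⟩ := hzero
    exact ⟨i, hi ▸ hasConnMatching_zero _ _⟩
  push Not at hzero
  obtain ⟨k, hk⟩ := Finite.exists_min x
  have hdel : ∀ v, ForcesConnMatching G (Finset.univ.erase v) := fun v =>
    hS _ (Finset.erase_ne_self.2 (Finset.mem_univ v))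
  rcases exists_hasConnMatching_or_forall_le_card_compl_componentFinset hx hdel hk with h | hm
  · exact h
  rcases forall_hasConnMatching_or_noTwoComponentsCover hG (Nat.pos_of_ne_zero (hzero k)) hm with
    h | hcov
  · exact ⟨k, h k⟩
  have : Nonempty V := Fintype.card_pos_iff.1 (by
    have hx₀ := hx 0
    have hpos := fun i => Nat.pos_of_ne_zero (hzero i)
    rw [Fin.sum_univ_three] at hx₀
    grind)
  obtain ⟨P₀, P, hP⟩ := exists_isCorePetalCover hG hcov
  exact hP.exists_hasConnMatching (hS P₀ hP.core_ne_univ) hx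

theorem forcesConnMatching_of_induce
    (h : ForcesConnMatching (fun i => (G i).induce (S : Set V)) Finset.univ) :
    ForcesConnMatching G S := by
  intro x hx
  obtain ⟨i, hi⟩ := h x (by simpa using hx)
  have := hi.map (Embedding.induce (S : Set V)).toHom Subtype.val_injective
  refine ⟨i, this.mono (fun v hv => ?_) le_rfl⟩
  obtain ⟨w, -, rfl⟩ := Finset.mem_map.1 hv
  exact w.2

end Induction

theorem iSup_colorSub (G : SimpleGraph V) {k : ℕ} (c : Sym2 V → Fin k) :
    ⨆ i, colorSub G c i = G := by
  ext u v
  simp only [iSup_adj, colorSub, fromRel_adj, Sym2.eq_swap (a := v), G.adj_comm v, or_self]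
  exact ⟨fun ⟨_, _, h, _⟩ => h, fun h => ⟨c s(u, v), h.ne, h, rfl⟩⟩

theorem stmt3_general {G : Fin 3 → SimpleGraph V} {S : Finset V}
    (hG : (⨆ i, G i).IsClique S) : ForcesConnMatching G S := by
  induction hn : S.card using Nat.strong_induction_on generalizing V with
  | _ n ih =>
    have htop : ⨆ i, (G i).induce (S : Set V) = ⊤ := by
      ext u v
      rw [iSup_adj, top_adj]
      refine ⟨fun ⟨_, h⟩ => h.ne, fun huv => ?_⟩
      obtain ⟨i, hi⟩ := iSup_adj.1 (hG u.2 v.2 (Subtype.coe_ne_coe.2 huv))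
      exact ⟨i, hi⟩
    refine forcesConnMatching_of_induce (forcesConnMatching_univ_of_forall_ne_univ htop ?_)
    intro T hT
    refine ih T.card ?_ (htop ▸ .top _) rfl
    calc T.card < Fintype.card S := (Finset.card_lt_iff_ne_univ T).2 hT
      _ = n := by rw [Fintype.card_coe, hn]

/-- 3-color version: in every 3-edge-coloring of `K_N` with
`N = 2x₁ + x₂ + x₃ - 2` (where `1 ≤ x₂, x₃ ≤ x₁`), some color `i` contains a
connected matching of size at least `xᵢ`. -/
theorem stmt3 (x : Fin 3 → ℕ) (h1 : 1 ≤ x 1) (h2 : 1 ≤ x 2)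
    (h12 : x 1 ≤ x 0) (h13 : x 2 ≤ x 0)
    (N : ℕ) (hN : N = 2 * x 0 + x 1 + x 2 - 2)
    (c : Sym2 (Fin N) → Fin 3) :
    ∃ i : Fin 3, ∃ M,
      ConnMatching (colorSub (⊤ : SimpleGraph (Fin N)) c i) M ∧ x i ≤ M.card := by
  have hx : ∀ j, x j + ∑ i, x i ≤ (Finset.univ : Finset (Fin N)).card + 2 := fun j => by
    have : x j ≤ x 0 := by fin_cases j <;> simp [h12, h13]
    rw [Fin.sum_univ_three, Finset.card_univ, Fintype.card_fin]
    omega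
  have hclique : (⨆ i, colorSub ⊤ c i).IsClique (Finset.univ : Finset (Fin N)) := by
    rw [iSup_colorSub]
    exact .top _
  obtain ⟨i, M, hM, -, hxM⟩ := stmt3_general hclique x hx
  exact ⟨i, M, hM, hxM⟩
end

section
/- Let G be a graph with Gallai–Edmonds decomposition (A, C, D), where A is the set of vertices of B (vertices covered by every maximum matching) having a neighbor outside B, C = B - A, and D = V(G) - B. Let G1, ..., Gk be the components of G[D]. Then every maximum matching M of G covers C, matches every vertex of A to vertices in distinct components of G[D], each Gi is factor-critical and M restricted to Gi is a near-perfect matching of Gi; moreover, for every nonempty S ⊆ A, the neighborhood N(S) intersects at least |S| + 1 of the components G1, ..., Gk. -/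
open SimpleGraph

variable {V : Type*}

/-- `M` is a maximum matching of `G`. -/
def IsMaxMatching [Fintype V] (G : SimpleGraph V) (M : Finset (V × V)) : Prop :=
  IsMatchingSet G M ∧ ∀ M', IsMatchingSet G M' → M'.card ≤ M.card

/-- `a` is matched to `d` by `M`. -/
def MatchedTo (M : Finset (V × V)) (a d : V) : Prop :=
  ∃ e ∈ M, (e.1 = a ∧ e.2 = d) ∨ (e.1 = d ∧ e.2 = a)

/-!
If neither of two matchings `M`, `N` has an edge leaving a set `K`, exchanging them inside `K`
preserves the sum of their sizes; when both are maximum, both results are again maximum. Applied to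
the alternating path of `M` and `N` that starts at a given vertex, this exchange yields Gallai's
lemma, that a maximum matching misses at most one vertex of each component of `G[D]`, and the
stability lemma, that deleting a vertex `a` of `A` replaces `D` by `D ∪ {a}` and decreases the size
of a maximum matching by one.

Call a vertex of `D` loose if a maximum matching `M` misses it or matches it outside `D`. A
component of `G[D]` contains at most one loose vertex: deleting the partner of a loose vertex makes
that vertex missed and, by stability, keeps the other vertices loose, so induction reduces the claim
to Gallai's lemma. Partners of distinct vertices of `A` therefore lie in distinct components, and
the restriction of `M` to a component is near-perfect. It is not perfect, since an `N` covering a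
whole component could be exchanged with a maximum matching missing a vertex of that component.
-/

section

variable {G H : SimpleGraph V} {M N : Finset (V × V)} {K : Set V} {a b d u v w x : V}

theorem MatchedTo.symm (h : MatchedTo M v w) : MatchedTo M w v :=
  let ⟨e, he, h⟩ := h
  ⟨e, he, h.symm⟩

theorem covers_iff_exists_matchedTo : Covers M v ↔ ∃ w, MatchedTo M v w := by
  constructor
  · rintro ⟨e, he, rfl | rfl⟩
    · exact ⟨e.2, e, he, Or.inl ⟨rfl, rfl⟩⟩
    · exact ⟨e.1, e, he, Or.inr ⟨rfl, rfl⟩⟩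
  · rintro ⟨w, e, he, h | h⟩
    · exact ⟨e, he, Or.inl h.1.symm⟩
    · exact ⟨e, he, Or.inr h.2.symm⟩

theorem MatchedTo.covers (h : MatchedTo M v w) : Covers M v :=
  covers_iff_exists_matchedTo.2 ⟨w, h⟩

theorem forall_matchedTo_imp_not {p : V → Prop} :
    (∀ w, MatchedTo M v w → ¬ p w) ↔
      ∀ e ∈ M, ¬ ((e.1 = v ∧ p e.2) ∨ (e.2 = v ∧ p e.1)) := by
  simp only [MatchedTo]
  grind

theorem IsMatchingSet.adj (hM : IsMatchingSet G M) (h : MatchedTo M v w) : G.Adj v w := by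
  obtain ⟨e, he, ⟨rfl, rfl⟩ | ⟨rfl, rfl⟩⟩ := h
  · exact hM.1 e he
  · exact (hM.1 e he).symm

theorem IsMatchingSet.eq_of_matchedTo (hM : IsMatchingSet G M) (hv : MatchedTo M u v)
    (hw : MatchedTo M u w) : v = w := by
  obtain ⟨e, he, hev⟩ := hv
  obtain ⟨e', he', hew⟩ := hw
  have := (hM.1 e he).ne
  have := hM.2 e he e' he'
  grind

theorem IsMatchingSet.mono (hM : IsMatchingSet G M) (h : G ≤ H) : IsMatchingSet H M :=
  ⟨fun e he => h (hM.1 e he), hM.2⟩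

theorem IsMatchingSet.exists_augment (hM : IsMatchingSet G M) (huv : G.Adj u v)
    (hu : ¬ Covers M u) (hv : ¬ Covers M v) :
    ∃ N, IsMatchingSet G N ∧ N.card = M.card + 1 ∧
      ∀ x, ¬ Covers M x → x ≠ u → x ≠ v → ¬ Covers N x := by
  classical
  have hadj := hM.1
  have hdisj := hM.2
  have huvM : (u, v) ∉ M := fun h => hu ⟨_, h, Or.inl rfl⟩
  simp only [Covers, not_exists, not_and, not_or] at hu hv ⊢
  refine ⟨insert (u, v) M, ⟨?_, ?_⟩, Finset.card_insert_of_notMem huvM, ?_⟩ <;> grind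

theorem isMatchingSet_deleteIncidenceSet_iff :
    IsMatchingSet (G.deleteIncidenceSet a) M ↔ IsMatchingSet G M ∧ ¬ Covers M a := by
  simp only [IsMatchingSet, Covers, G.deleteIncidenceSet_adj]
  grind

theorem setOf_covers_eq_coe_biUnion [DecidableEq V] :
    {v | Covers M v} = (M.biUnion fun e => {e.1, e.2} : Finset V) := by
  ext v
  simp [Covers]

theorem IsMatchingSet.ncard_setOf_covers (hM : IsMatchingSet G M) :
    {v | Covers M v}.ncard = 2 * M.card := by
  classical
  have hdisj : (M : Set (V × V)).PairwiseDisjoint fun e => ({e.1, e.2} : Finset V) := by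
    intro e he e' he' hne
    have := hM.2 e he e' he' hne
    rw [Function.onFun, Finset.disjoint_left]
    grind
  rw [setOf_covers_eq_coe_biUnion, Set.ncard_coe_finset, Finset.card_biUnion hdisj,
    Finset.sum_const_nat fun e he => Finset.card_pair (hM.1 e he).ne, mul_comm]

theorem IsMatchingSet.card_lt_card (hM : IsMatchingSet G M) (hN : IsMatchingSet H N)
    (h : {v | Covers M v} ⊂ {v | Covers N v}) : M.card < N.card := by
  classical
  have hfin : {v | Covers N v}.Finite := by
    rw [setOf_covers_eq_coe_biUnion]
    exact Finset.finite_toSet _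
  have := Set.ncard_lt_ncard h hfin
  rw [hM.ncard_setOf_covers, hN.ncard_setOf_covers] at this
  omega

/-! ### Restricting a matching to a subgraph -/

open Classical in
/-- The edges of `M` that belong to the graph `H`. -/
noncomputable def restrict (M : Finset (V × V)) (H : SimpleGraph V) : Finset (V × V) :=
  {e ∈ M | H.Adj e.1 e.2}

theorem matchedTo_restrict : MatchedTo (restrict M H) u v ↔ MatchedTo M u v ∧ H.Adj u v := by
  have := H.adj_comm u v
  simp only [MatchedTo, restrict, Finset.mem_filter]
  grind

protected theorem IsMatchingSet.restrict (hM : IsMatchingSet G M) (H : SimpleGraph V) :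
    IsMatchingSet H (restrict M H) := by
  have := hM.2
  constructor <;> simp only [restrict, Finset.mem_filter] <;> grind

theorem IsMatchingSet.covers_restrict_deleteIncidenceSet (hM : IsMatchingSet G M)
    (hab : MatchedTo M a b) :
    Covers (restrict M (G.deleteIncidenceSet a)) v ↔ Covers M v ∧ v ≠ a ∧ v ≠ b := by
  simp only [covers_iff_exists_matchedTo, matchedTo_restrict, G.deleteIncidenceSet_adj]
  constructor
  · rintro ⟨w, hvw, -, hva, hwa⟩
    refine ⟨⟨w, hvw⟩, hva, ?_⟩
    rintro rfl
    exact hwa (hM.eq_of_matchedTo hvw hab.symm)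
  · rintro ⟨⟨w, hvw⟩, hva, hvb⟩
    refine ⟨w, hvw, hM.adj hvw, hva, ?_⟩
    rintro rfl
    exact hvb (hM.eq_of_matchedTo hvw.symm hab)

theorem IsMatchingSet.card_restrict_deleteIncidenceSet (hM : IsMatchingSet G M)
    (ha : Covers M a) :
    (restrict M (G.deleteIncidenceSet a)).card + 1 = M.card := by
  classical
  obtain ⟨e, he, hae⟩ := ha
  have h : restrict M (G.deleteIncidenceSet a) = M.erase e := by
    ext e'
    have := hM.1
    have := hM.2 e he e'
    simp only [restrict, Finset.mem_filter, Finset.mem_erase, G.deleteIncidenceSet_adj]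
    grind
  rw [h, Finset.card_erase_add_one he]

/-! ### Switching along alternating components -/

/-- No edge of `M` leaves `K`. -/
def Respects (M : Finset (V × V)) (K : Set V) : Prop :=
  ∀ ⦃u v⦄, MatchedTo M u v → u ∈ K → v ∈ K

open Classical in
/-- `N` inside `K` and `M` outside `K`. -/
noncomputable def switch (M N : Finset (V × V)) (K : Set V) : Finset (V × V) :=
  {e ∈ M | e.1 ∉ K} ∪ {e ∈ N | e.1 ∈ K}

theorem Respects.mem_iff (hMK : Respects M K) {e : V × V} (he : e ∈ M) : e.1 ∈ K ↔ e.2 ∈ K :=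
  have h : MatchedTo M e.1 e.2 := ⟨e, he, Or.inl ⟨rfl, rfl⟩⟩
  ⟨fun he => hMK h he, fun he => hMK h.symm he⟩

protected theorem IsMatchingSet.switch (hM : IsMatchingSet G M) (hN : IsMatchingSet G N)
    (hMK : Respects M K) (hNK : Respects N K) : IsMatchingSet G (switch M N K) := by
  have hM1 := hM.1
  have hN1 := hN.1
  have hM2 := hM.2
  have hN2 := hN.2
  have hMK' := fun e => hMK.mem_iff (e := e)
  have hNK' := fun e => hNK.mem_iff (e := e)
  constructor <;> simp only [switch, Finset.mem_union, Finset.mem_filter] <;> grind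

theorem covers_switch_of_mem (hMK : Respects M K) (hNK : Respects N K) (hv : v ∈ K) :
    Covers (switch M N K) v ↔ Covers N v := by
  have hMK' := fun e => hMK.mem_iff (e := e)
  have hNK' := fun e => hNK.mem_iff (e := e)
  simp only [Covers, switch, Finset.mem_union, Finset.mem_filter]
  grind

theorem covers_switch_of_notMem (hMK : Respects M K) (hNK : Respects N K) (hv : v ∉ K) :
    Covers (switch M N K) v ↔ Covers M v := by
  have hMK' := fun e => hMK.mem_iff (e := e)
  have hNK' := fun e => hNK.mem_iff (e := e)
  simp only [Covers, switch, Finset.mem_union, Finset.mem_filter]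
  grind

theorem card_switch_add_card_switch (M N : Finset (V × V)) (K : Set V) :
    (switch M N K).card + (switch N M K).card = M.card + N.card := by
  classical
  have hcard (P Q : Finset (V × V)) : (switch P Q K).card =
      (P.filter fun e => e.1 ∉ K).card + (Q.filter fun e => e.1 ∈ K).card := by
    rw [switch, Finset.card_union_of_disjoint (by rw [Finset.disjoint_left]; grind)]
  rw [hcard, hcard, ← Finset.card_filter_add_card_filter_not (s := M) fun e => e.1 ∈ K,
    ← Finset.card_filter_add_card_filter_not (s := N) fun e => e.1 ∈ K]
  omega

/-- `K` is the alternating path from `x`, with `y` its other end. After deleting `x` and its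
`M`-partner `z` from `M`, the path continues from `z` with the roles of `M` and `N` exchanged. -/
theorem IsMatchingSet.exists_alternating_component (hM : IsMatchingSet G M)
    (hN : IsMatchingSet H N) (hx : ¬ Covers N x) :
    ∃ K, x ∈ K ∧ Respects M K ∧ Respects N K ∧
      ∃ y, (∀ v ∈ K, ¬ Covers M v → v = y) ∧ ∀ v ∈ K, ¬ Covers N v → v = x ∨ v = y := by
  induction h : M.card + N.card using Nat.strong_induction_on generalizing G H M N x with
  | h n ih =>
  by_cases hxM : Covers M x
  · obtain ⟨z, hxz⟩ := covers_iff_exists_matchedTo.1 hxM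
    have hM' := fun v => hM.covers_restrict_deleteIncidenceSet (v := v) hxz
    have hcard := hM.card_restrict_deleteIncidenceSet hxM
    obtain ⟨K, hzK, hNK, hMK, y, hNy, hMy⟩ :=
      ih _ (by omega) hN (hM.restrict _) (fun h => ((hM' z).1 h).2.2 rfl) rfl
    refine ⟨insert x K, Set.mem_insert x K, fun u v huv hu => ?_, fun u v huv hu => ?_, y,
      fun v hv hvM => ?_, fun v hv hvN => ?_⟩
    · by_cases hux : u = x
      · subst hux
        exact Or.inr (hM.eq_of_matchedTo hxz huv ▸ hzK)
      by_cases hvx : v = x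
      · exact Or.inl hvx
      · exact Or.inr (hMK (matchedTo_restrict.2
          ⟨huv, G.deleteIncidenceSet_adj.2 ⟨hM.adj huv, hux, hvx⟩⟩) (hu.resolve_left hux))
    · exact Or.inr (hNK huv (hu.resolve_left fun h => hx (h ▸ huv.covers)))
    · have hvx : v ≠ x := fun h => hvM (h ▸ hxM)
      have hvz : v ≠ z := fun h => hvM (h ▸ hxz.symm.covers)
      exact (hMy v (hv.resolve_left hvx) fun h => hvM ((hM' v).1 h).1).resolve_left hvz
    · exact hv.imp_right fun hv => hNy v hv hvN
  · refine ⟨{x}, rfl, ?_, ?_, x, fun v hv _ => hv, fun v hv _ => Or.inl hv⟩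
    · rintro _ v huv rfl
      exact absurd huv.covers hxM
    · rintro _ v huv rfl
      exact absurd huv.covers hx

/-! ### Inessential vertices -/

/-- A matching of maximum size among the finite matchings of `G`. Unlike `IsMaxMatching`, it does
not ask for finitely many vertices. -/
def IsMaximumMatchingSet (G : SimpleGraph V) (M : Finset (V × V)) : Prop :=
  IsMatchingSet G M ∧ ∀ M', IsMatchingSet G M' → M'.card ≤ M.card

/-- The vertices missed by some maximum matching: the set `D` of the Gallai–Edmonds
decomposition. -/
def inessential (G : SimpleGraph V) : Set V :=
  {v | ∃ M, IsMaximumMatchingSet G M ∧ ¬ Covers M v}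

/-- The essential vertices with an inessential neighbour: the set `A` of the Gallai–Edmonds
decomposition. -/
def essentialBoundary (G : SimpleGraph V) : Set V :=
  {a | a ∉ inessential G ∧ ∃ d ∈ inessential G, G.Adj a d}

/-- The subgraph `G[D]` spanned by the inessential vertices. It keeps the vertex type `V`, and the
essential vertices are isolated in it. -/
def inessentialGraph (G : SimpleGraph V) : SimpleGraph V :=
  SimpleGraph.fromRel fun u v => G.Adj u v ∧ u ∈ inessential G ∧ v ∈ inessential G

theorem inessentialGraph_adj :
    (inessentialGraph G).Adj u v ↔ G.Adj u v ∧ u ∈ inessential G ∧ v ∈ inessential G := by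
  have := G.adj_comm u v
  have : G.Adj u v → u ≠ v := fun h => h.ne
  rw [inessentialGraph, SimpleGraph.fromRel_adj]
  tauto

theorem inessentialGraph_le (G : SimpleGraph V) : inessentialGraph G ≤ G :=
  fun _ _ h => (inessentialGraph_adj.1 h).1

theorem mem_inessential_of_reachable (hu : u ∈ inessential G)
    (huv : (inessentialGraph G).Reachable u v) : v ∈ inessential G := by
  rw [SimpleGraph.reachable_iff_reflTransGen] at huv
  cases huv with
  | refl => exact hu
  | tail _ h => exact (inessentialGraph_adj.1 h).2.2

theorem IsMaximumMatchingSet.covers_of_notMem (hM : IsMaximumMatchingSet G M)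
    (hv : v ∉ inessential G) : Covers M v :=
  by_contra fun h => hv ⟨M, hM, h⟩

theorem IsMaximumMatchingSet.of_card_le (hM : IsMaximumMatchingSet G M) (hN : IsMatchingSet G N)
    (hMN : M.card ≤ N.card) : IsMaximumMatchingSet G N :=
  ⟨hN, fun P hP => (hM.2 P hP).trans hMN⟩

theorem IsMaximumMatchingSet.not_adj (hM : IsMaximumMatchingSet G M) (hu : ¬ Covers M u)
    (hv : ¬ Covers M v) : ¬ G.Adj u v := by
  intro huv
  obtain ⟨N, hN, hcard, -⟩ := hM.1.exists_augment huv hu hv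
  have := hM.2 N hN
  omega

protected theorem IsMaximumMatchingSet.switch (hM : IsMaximumMatchingSet G M)
    (hN : IsMaximumMatchingSet G N) (hMK : Respects M K) (hNK : Respects N K) :
    IsMaximumMatchingSet G (switch M N K) := by
  have hcard := card_switch_add_card_switch M N K
  have hle := hM.2 _ (hN.1.switch hM.1 hNK hMK)
  exact hN.of_card_le (hM.1.switch hN.1 hMK hNK) (by omega)

/-- Switching along the alternating component of `t` would otherwise produce a maximum matching
missing `t` together with `u` or `v`. -/
theorem IsMaximumMatchingSet.eq_of_forall_missed {t : V} (ht : t ∈ inessential G)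
    (hut : ∀ N, IsMaximumMatchingSet G N → ¬ Covers N u → ¬ Covers N t → u = t)
    (htv : ∀ N, IsMaximumMatchingSet G N → ¬ Covers N t → ¬ Covers N v → t = v)
    (hM : IsMaximumMatchingSet G M) (hu : ¬ Covers M u) (hv : ¬ Covers M v) : u = v := by
  obtain ⟨N, hN, htN⟩ := ht
  obtain ⟨K, htK, hMK, hNK, y, hy, -⟩ := hM.1.exists_alternating_component hN.1 htN
  have hP := hM.switch hN hMK hNK
  have htP := (covers_switch_of_mem hMK hNK htK).not.2 htN
  have huK : u ∈ K := by
    by_contra huK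
    exact huK (hut _ hP ((covers_switch_of_notMem hMK hNK huK).not.2 hu) htP ▸ htK)
  have hvK : v ∈ K := by
    by_contra hvK
    exact hvK (htv _ hP htP ((covers_switch_of_notMem hMK hNK hvK).not.2 hv) ▸ htK)
  exact (hy u huK hu).trans (hy v hvK hv).symm

/-- Gallai's lemma. -/
theorem IsMaximumMatchingSet.eq_of_reachable_of_not_covers (hM : IsMaximumMatchingSet G M)
    (huv : (inessentialGraph G).Reachable u v) (hu : ¬ Covers M u) (hv : ¬ Covers M v) :
    u = v := by
  rw [SimpleGraph.reachable_iff_reflTransGen] at huv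
  induction huv generalizing M with
  | refl => rfl
  | tail _ htw ih =>
    obtain ⟨htw, ht, -⟩ := inessentialGraph_adj.1 htw
    exact hM.eq_of_forall_missed ht (fun N hN hu ht => ih hN hu ht)
      (fun N hN ht hw => absurd htw (hN.not_adj ht hw)) hu hv

/-! ### Deleting an essential vertex -/

theorem IsMaximumMatchingSet.restrict_deleteIncidenceSet (hM : IsMaximumMatchingSet G M)
    (ha : a ∉ inessential G) :
    IsMaximumMatchingSet (G.deleteIncidenceSet a) (restrict M (G.deleteIncidenceSet a)) := by
  refine ⟨hM.1.restrict _, fun N hN => ?_⟩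
  have hcard := hM.1.card_restrict_deleteIncidenceSet (hM.covers_of_notMem ha)
  obtain ⟨hNG, haN⟩ := isMatchingSet_deleteIncidenceSet_iff.1 hN
  by_contra! hlt
  exact ha ⟨N, hM.of_card_le hNG (by omega), haN⟩

theorem insert_inessential_subset_inessential_deleteIncidenceSet
    (ha : a ∈ essentialBoundary G) :
    insert a (inessential G) ⊆ inessential (G.deleteIncidenceSet a) := by
  have hdel {M : Finset (V × V)} (hM : IsMaximumMatchingSet G M) {v : V}
      (hv : v = a ∨ ¬ Covers M v) : v ∈ inessential (G.deleteIncidenceSet a) := by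
    obtain ⟨b, hab⟩ := covers_iff_exists_matchedTo.1 (hM.covers_of_notMem ha.1)
    refine ⟨_, hM.restrict_deleteIncidenceSet ha.1, fun h => ?_⟩
    obtain ⟨hvM, hva, -⟩ := (hM.1.covers_restrict_deleteIncidenceSet hab).1 h
    exact hv.elim hva (· hvM)
  obtain ⟨-, d, ⟨M, hM, -⟩, -⟩ := ha
  rintro v (rfl | ⟨N, hN, hvN⟩)
  · exact hdel hM (Or.inl rfl)
  · exact hdel hN (Or.inr hvN)

/-- If the alternating component of `x` contains `a`, then its other end is `a`, so it avoids `d`: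
switching on it uncovers `a` and leaves `d` uncovered, and the edge `ad` can be added. -/
theorem inessential_deleteIncidenceSet_subset (ha : a ∈ essentialBoundary G) :
    inessential (G.deleteIncidenceSet a) ⊆ insert a (inessential G) := by
  rintro x ⟨N, hN, hxN⟩
  obtain ⟨ha, d, ⟨M, hM, hdM⟩, had⟩ := ha
  obtain ⟨hNG, haN⟩ := isMatchingSet_deleteIncidenceSet_iff.1 hN.1
  have hcard := hM.1.card_restrict_deleteIncidenceSet (hM.covers_of_notMem ha)
  have hle := hN.2 _ (hM.1.restrict _)
  refine or_iff_not_imp_left.2 fun hxa => ?_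
  obtain ⟨K, hxK, hMK, hNK, y, hyM, hyN⟩ := hM.1.exists_alternating_component hNG hxN
  have hP := hM.1.switch hNG hMK hNK
  have hQ := hNG.switch hM.1 hNK hMK
  have hPQ := card_switch_add_card_switch M N K
  have hxP := (covers_switch_of_mem hMK hNK hxK).not.2 hxN
  by_cases haK : a ∈ K
  · have hdK : d ∉ K := fun hdK =>
      had.ne (((hyN a haK haN).resolve_left (Ne.symm hxa)).trans (hyM d hdK hdM).symm)
    have haP := (covers_switch_of_mem hMK hNK haK).not.2 haN
    have hdP := (covers_switch_of_notMem hMK hNK hdK).not.2 hdM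
    obtain ⟨R, hR, hRcard, hRP⟩ := hP.exists_augment had haP hdP
    have := hM.2 _ hQ
    exact ⟨R, hM.of_card_le hR (by omega), hRP x hxP hxa fun h => hdK (h ▸ hxK)⟩
  · have haQ := (covers_switch_of_notMem hNK hMK haK).not.2 haN
    have := hN.2 _ (isMatchingSet_deleteIncidenceSet_iff.2 ⟨hQ, haQ⟩)
    exact ⟨_, hM.of_card_le hP (by omega), hxP⟩

/-- The stability lemma. -/
theorem inessential_deleteIncidenceSet (ha : a ∈ essentialBoundary G) :
    inessential (G.deleteIncidenceSet a) = insert a (inessential G) :=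
  (inessential_deleteIncidenceSet_subset ha).antisymm
    (insert_inessential_subset_inessential_deleteIncidenceSet ha)

/-! ### Components of inessential vertices -/

theorem IsMaximumMatchingSet.eq_of_reachable_of_forall_matchedTo_notMem
    (hM : IsMaximumMatchingSet G M) (hu : u ∈ inessential G)
    (huv : (inessentialGraph G).Reachable u v)
    (huM : ∀ w, MatchedTo M u w → w ∉ inessential G)
    (hvM : ∀ w, MatchedTo M v w → w ∉ inessential G) : u = v := by
  induction h : M.card using Nat.strong_induction_on generalizing G M u v with
  | h n ih =>
  wlog hcov : Covers M u generalizing u v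
  · by_cases hvcov : Covers M v
    · exact (this (mem_inessential_of_reachable hu huv) huv.symm hvM huM hvcov).symm
    · exact hM.eq_of_reachable_of_not_covers huv hcov hvcov
  obtain ⟨a, hua⟩ := covers_iff_exists_matchedTo.1 hcov
  have ha := huM a hua
  have hD := inessential_deleteIncidenceSet ⟨ha, u, hu, (hM.1.adj hua).symm⟩
  have hle : inessentialGraph G ≤ inessentialGraph (G.deleteIncidenceSet a) := by
    intro s t hst
    obtain ⟨hst, hs, ht⟩ := inessentialGraph_adj.1 hst
    rw [inessentialGraph_adj, G.deleteIncidenceSet_adj, hD]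
    exact ⟨⟨hst, fun h => ha (h ▸ hs), fun h => ha (h ▸ ht)⟩, Or.inr hs, Or.inr ht⟩
  have hloose : ∀ s, (∀ w, MatchedTo M s w → w ∉ inessential G) →
      ∀ w, MatchedTo (restrict M (G.deleteIncidenceSet a)) s w →
        w ∉ inessential (G.deleteIncidenceSet a) := by
    intro s hs w hsw
    obtain ⟨hsw, hadj⟩ := matchedTo_restrict.1 hsw
    rw [hD]
    exact fun hw => hw.elim (G.deleteIncidenceSet_adj.1 hadj).2.2 (hs w hsw)
  have hcard := hM.1.card_restrict_deleteIncidenceSet hua.symm.covers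
  exact ih _ (by omega) (hM.restrict_deleteIncidenceSet ha) (hD ▸ Or.inr hu) (huv.mono hle)
    (hloose u huM) (hloose v hvM) rfl

theorem IsMaximumMatchingSet.not_reachable_of_matchedTo (hM : IsMaximumMatchingSet G M)
    (ha : a ∉ inessential G) (hb : b ∉ inessential G) (hab : a ≠ b) (hu : u ∈ inessential G)
    (hau : MatchedTo M a u) (hbv : MatchedTo M b v) : ¬ (inessentialGraph G).Reachable u v := by
  intro huv
  have hloose {c s : V} (hc : c ∉ inessential G) (hcs : MatchedTo M c s) :
      ∀ w, MatchedTo M s w → w ∉ inessential G :=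
    fun w hsw => hM.1.eq_of_matchedTo hcs.symm hsw ▸ hc
  obtain rfl :=
    hM.eq_of_reachable_of_forall_matchedTo_notMem hu huv (hloose ha hau) (hloose hb hbv)
  exact hab (hM.1.eq_of_matchedTo hau.symm hbv.symm)

theorem IsMaximumMatchingSet.exists_mem_inessential_matchedTo (hM : IsMaximumMatchingSet G M)
    (ha : a ∈ essentialBoundary G) : ∃ d ∈ inessential G, MatchedTo M a d := by
  obtain ⟨b, hab⟩ := covers_iff_exists_matchedTo.1 (hM.covers_of_notMem ha.1)
  have hb : b ∈ inessential (G.deleteIncidenceSet a) :=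
    ⟨_, hM.restrict_deleteIncidenceSet ha.1, fun h =>
      ((hM.1.covers_restrict_deleteIncidenceSet hab).1 h).2.2 rfl⟩
  rw [inessential_deleteIncidenceSet ha] at hb
  exact ⟨b, hb.resolve_left (hM.1.adj hab).ne', hab⟩

theorem IsMaximumMatchingSet.exists_inessentialGraph_adj_of_ne (hM : IsMaximumMatchingSet G M)
    (hd : ¬ Covers M d) (hdv : (inessentialGraph G).Reachable d v) (hvd : v ≠ d) :
    ∃ w, MatchedTo M v w ∧ (inessentialGraph G).Adj v w := by
  have hdD : d ∈ inessential G := ⟨M, hM, hd⟩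
  by_contra! h
  refine hvd (hM.eq_of_reachable_of_forall_matchedTo_notMem hdD hdv
    (fun w hw => absurd hw.covers hd) fun w hvw hw => ?_).symm
  exact h w hvw (inessentialGraph_adj.2 ⟨hM.1.adj hvw, mem_inessential_of_reachable hdD hdv, hw⟩)

theorem exists_isMatchingSet_inessentialGraph (hd : d ∈ inessential G) :
    ∃ N, IsMatchingSet (inessentialGraph G) N ∧ ¬ Covers N d ∧
      ∀ u, (inessentialGraph G).Reachable d u → u ≠ d → Covers N u := by
  obtain ⟨M, hM, hdM⟩ := hd
  refine ⟨_, hM.1.restrict (inessentialGraph G), fun h => ?_, fun u hdu hud => ?_⟩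
  · obtain ⟨w, hw⟩ := covers_iff_exists_matchedTo.1 h
    exact hdM (matchedTo_restrict.1 hw).1.covers
  · obtain ⟨w, hw⟩ := hM.exists_inessentialGraph_adj_of_ne hdM hdu hud
    exact (matchedTo_restrict.2 hw).covers

theorem IsMatchingSet.exists_not_covers (hN : IsMatchingSet (inessentialGraph G) N)
    (hd : d ∈ inessential G) : ∃ u, (inessentialGraph G).Reachable d u ∧ ¬ Covers N u := by
  by_contra! hcov
  obtain ⟨M, hM, hdM⟩ := hd
  let K := {u | (inessentialGraph G).Reachable d u}
  have hdK : d ∈ K := SimpleGraph.Reachable.rfl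
  have hNK : Respects N K := fun u v huv hu => hu.trans (hN.adj huv).reachable
  have hMK : Respects M K := by
    intro u v huv hu
    have hud : u ≠ d := fun h => hdM (h ▸ huv.covers)
    obtain ⟨w, huw, hadj⟩ := hM.exists_inessentialGraph_adj_of_ne hdM hu hud
    exact hM.1.eq_of_matchedTo huw huv ▸ hu.trans hadj.reachable
  have hP := hM.1.switch (hN.mono (inessentialGraph_le G)) hMK hNK
  refine (hM.2 _ hP).not_gt (hM.1.card_lt_card hP ⟨fun v hv => ?_, fun h => ?_⟩)
  · by_cases hvK : v ∈ K
    · exact (covers_switch_of_mem hMK hNK hvK).2 (hcov v hvK)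
    · exact (covers_switch_of_notMem hMK hNK hvK).2 hv
  · exact hdM (h ((covers_switch_of_mem hMK hNK hdK).2 (hcov d hdK)))

theorem IsMaximumMatchingSet.existsUnique_forall_matchedTo_not_reachable
    (hM : IsMaximumMatchingSet G M) (hd : d ∈ inessential G) :
    ∃! v, (inessentialGraph G).Reachable d v ∧
      ∀ w, MatchedTo M v w → ¬ (inessentialGraph G).Reachable d w := by
  have hmem := fun v => mem_inessential_of_reachable (v := v) hd
  obtain ⟨u, hu, huN⟩ := (hM.1.restrict (inessentialGraph G)).exists_not_covers hd
  have huM : ∀ w, MatchedTo M u w → w ∉ inessential G := fun w huw hw =>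
    huN (matchedTo_restrict.2
      ⟨huw, inessentialGraph_adj.2 ⟨hM.1.adj huw, hmem u hu, hw⟩⟩).covers
  refine ⟨u, ⟨hu, fun w huw hw => huM w huw (hmem w hw)⟩, fun v ⟨hv, hvM⟩ => ?_⟩
  refine hM.eq_of_reachable_of_forall_matchedTo_notMem (hmem v hv) (hv.symm.trans hu)
    (fun w hvw hw => ?_) huM
  exact hvM w hvw (hv.trans
    (inessentialGraph_adj.2 ⟨hM.1.adj hvw, hmem v hv, hw⟩ : (inessentialGraph G).Adj v w).reachable)

/-- The representatives are the partners of `S` and a neighbour `d` of `S` in a maximum matching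
missing `d`. -/
theorem exists_finset_not_reachable {S : Finset V} (hSG : ↑S ⊆ essentialBoundary G)
    (hS : S.Nonempty) :
    ∃ T : Finset V, T.card = S.card + 1 ∧
      (∀ t ∈ T, t ∈ inessential G ∧ ∃ a ∈ S, G.Adj a t) ∧
      ∀ t ∈ T, ∀ t' ∈ T, t ≠ t' → ¬ (inessentialGraph G).Reachable t t' := by
  classical
  obtain ⟨s, hs⟩ := hS
  obtain ⟨-, d, hd, hsd⟩ := hSG hs
  obtain ⟨M, hM, hdM⟩ := id hd
  have hpartner : ∀ a ∈ S, ∃ b ∈ inessential G, MatchedTo M a b := fun a ha =>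
    hM.exists_mem_inessential_matchedTo (hSG ha)
  choose! f hfD hf using hpartner
  have hinj : Set.InjOn f S := fun a ha b hb hab =>
    hM.1.eq_of_matchedTo (hf a ha).symm (hab ▸ (hf b hb).symm)
  have hdS : d ∉ S.image f := fun h => by
    obtain ⟨a, ha, rfl⟩ := Finset.mem_image.1 h
    exact hdM (hf a ha).symm.covers
  have hT : ∀ t ∈ insert d (S.image f), t ∈ inessential G ∧ (∃ a ∈ S, G.Adj a t) ∧
      ∀ w, MatchedTo M t w → w ∉ inessential G := by
    intro t ht
    rcases Finset.mem_insert.1 ht with rfl | ht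
    · exact ⟨hd, ⟨s, hs, hsd⟩, fun w hw => absurd hw.covers hdM⟩
    · obtain ⟨a, ha, rfl⟩ := Finset.mem_image.1 ht
      exact ⟨hfD a ha, ⟨a, ha, hM.1.adj (hf a ha)⟩, fun w hw =>
        hM.1.eq_of_matchedTo (hf a ha).symm hw ▸ (hSG ha).1⟩
  refine ⟨_, ?_, fun t ht => ⟨(hT t ht).1, (hT t ht).2.1⟩, fun t ht t' ht' hne h => ?_⟩
  · rw [Finset.card_insert_of_notMem hdS, Finset.card_image_of_injOn hinj]
  · exact hne (hM.eq_of_reachable_of_forall_matchedTo_notMem (hT t ht).1 h (hT t ht).2.2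
      (hT t' ht').2.2)

end

theorem stmt8_general {V : Type*} (G : SimpleGraph V)
    (B A C D : Set V)
    (hB : B = {v | ∀ M, IsMaximumMatchingSet G M → Covers M v})
    (hA : A = {v ∈ B | ∃ u, G.Adj v u ∧ u ∉ B})
    (hC : C = B \ A) (hD : D = Bᶜ)
    (GD : SimpleGraph V)
    (hGD : GD = SimpleGraph.fromRel (fun u v => G.Adj u v ∧ u ∈ D ∧ v ∈ D))
    (M : Finset (V × V)) (hM : IsMaximumMatchingSet G M) :
    (∀ v ∈ C, Covers M v) ∧
    (∀ a ∈ A, ∃ d ∈ D, MatchedTo M a d) ∧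
    (∀ a ∈ A, ∀ a' ∈ A, ∀ d ∈ D, ∀ d' ∈ D, a ≠ a' →
      MatchedTo M a d → MatchedTo M a' d' → ¬ GD.Reachable d d') ∧
    (∀ d ∈ D,
      (∀ v, GD.Reachable d v →
        ∃ M', IsMatchingSet GD M' ∧ ¬ Covers M' v ∧
          ∀ u, GD.Reachable d u → u ≠ v → Covers M' u) ∧
      ¬ (∃ M', IsMatchingSet GD M' ∧ ∀ u, GD.Reachable d u → Covers M' u) ∧
      (∃! v, GD.Reachable d v ∧ ∀ e ∈ M,
        ¬ ((e.1 = v ∧ GD.Reachable d e.2) ∨ (e.2 = v ∧ GD.Reachable d e.1)))) ∧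
    (∀ S : Finset V, ↑S ⊆ A → S.Nonempty →
      ∃ T : Finset V, T.card = S.card + 1 ∧
        (∀ t ∈ T, t ∈ D ∧ ∃ a ∈ S, G.Adj a t) ∧
        ∀ t ∈ T, ∀ t' ∈ T, t ≠ t' → ¬ GD.Reachable t t') := by
  obtain rfl : B = (inessential G)ᶜ := by
    ext v
    simp [hB, inessential]
  obtain rfl : D = inessential G := hD.trans (compl_compl _)
  obtain rfl : A = essentialBoundary G := by
    ext v
    simp [hA, essentialBoundary, and_comm]
  obtain rfl : GD = inessentialGraph G := hGD
  refine ⟨fun v hv => ?_, fun a ha => hM.exists_mem_inessential_matchedTo ha, ?_,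
    fun d hd => ⟨fun v hv => ?_, ?_, ?_⟩, fun S => exists_finset_not_reachable⟩
  · rw [hC] at hv
    exact hM.covers_of_notMem hv.1
  · intro a ha a' ha' d hd d' _ hne had had'
    exact hM.not_reachable_of_matchedTo ha.1 ha'.1 hne hd had had'
  · obtain ⟨N, hN, hvN, hcov⟩ :=
      exists_isMatchingSet_inessentialGraph (mem_inessential_of_reachable hd hv)
    exact ⟨N, hN, hvN, fun u hu => hcov u (hv.symm.trans hu)⟩
  · rintro ⟨N, hN, hcov⟩
    obtain ⟨u, hu, huN⟩ := hN.exists_not_covers hd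
    exact huN (hcov u hu)
  · simpa only [forall_matchedTo_imp_not] using hM.existsUnique_forall_matchedTo_not_reachable hd

/-- The Gallai–Edmonds structure theorem. Here `B` is the set of vertices
covered by every maximum matching, `A ⊆ B` are those with a neighbor outside
`B`, `C = B \ A`, `D = V \ B`, and `GD` is the subgraph of `G` induced by `D`
(so for `d ∈ D`, the set `{v | GD.Reachable d v}` is the component of `d` in
`G[D]`). Every maximum matching `M` covers `C`, matches each vertex of `A`
into `D`, with distinct vertices of `A` matched into distinct components of
`G[D]`; each component of `G[D]` is factor-critical and `M` restricted to it
is near-perfect; and the neighborhood of any nonempty `S ⊆ A` meets at least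
`|S| + 1` components of `G[D]`. -/
theorem stmt8 {V : Type*} [Fintype V] (G : SimpleGraph V)
    (B A C D : Set V)
    (hB : B = {v | ∀ M, IsMaxMatching G M → Covers M v})
    (hA : A = {v ∈ B | ∃ u, G.Adj v u ∧ u ∉ B})
    (hC : C = B \ A) (hD : D = Bᶜ)
    (GD : SimpleGraph V)
    (hGD : GD = SimpleGraph.fromRel (fun u v => G.Adj u v ∧ u ∈ D ∧ v ∈ D))
    (M : Finset (V × V)) (hM : IsMaxMatching G M) :
    -- (a) M covers C, and matches A into distinct components of G[D]
    (∀ v ∈ C, Covers M v) ∧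
    (∀ a ∈ A, ∃ d ∈ D, MatchedTo M a d) ∧
    (∀ a ∈ A, ∀ a' ∈ A, ∀ d ∈ D, ∀ d' ∈ D, a ≠ a' →
      MatchedTo M a d → MatchedTo M a' d' → ¬ GD.Reachable d d') ∧
    -- (b) each component of G[D] is factor-critical and meets M in a
    -- near-perfect matching of the component
    (∀ d ∈ D,
      (∀ v, GD.Reachable d v →
        ∃ M', IsMatchingSet GD M' ∧ ¬ Covers M' v ∧
          ∀ u, GD.Reachable d u → u ≠ v → Covers M' u) ∧
      ¬ (∃ M', IsMatchingSet GD M' ∧ ∀ u, GD.Reachable d u → Covers M' u) ∧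
      (∃! v, GD.Reachable d v ∧ ∀ e ∈ M,
        ¬ ((e.1 = v ∧ GD.Reachable d e.2) ∨ (e.2 = v ∧ GD.Reachable d e.1)))) ∧
    -- (c) N(S) meets at least |S| + 1 components of G[D]
    (∀ S : Finset V, ↑S ⊆ A → S.Nonempty →
      ∃ T : Finset V, T.card = S.card + 1 ∧
        (∀ t ∈ T, t ∈ D ∧ ∃ a ∈ S, G.Adj a t) ∧
        ∀ t ∈ T, ∀ t' ∈ T, t ≠ t' → ¬ GD.Reachable t t') :=
  stmt8_general G B A C D hB hA hC hD GD hGD M hM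
end
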